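/- Let k and t be positive integers with k ≥ 4 and let ε > 0. There exist δ > 0 and an integer n₀ such that for all integers n ≥ n₀: if F ⊆ binom([n],k) contains no copy of the k-uniform linear path P^{(k)}_{2t+2} (in particular, if F contains no copy of P^{(k)}_{2t+1}) and |F| ≥ (t−δ)·C(n,k−1), then there exists a set S ⊆ [n] with |S| = t such that the number of members of F disjoint from S is at most ε·C(n,k−1). -/

import Mathlib

open Finset

/-- The family `F` of k-sets contains a k-uniform linear path of length ℓ:
distinct members `P 0, …, P (ℓ-1)` with consecutive members meeting in exactly one
vertex and non-consecutive members disjoint. -/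
def ContainsLinearPath (k ℓ : ℕ) {n : ℕ} (F : Finset (Finset (Fin n))) : Prop :=
  ∃ P : Fin ℓ → Finset (Fin n), Function.Injective P ∧
    (∀ i, P i ∈ F) ∧ (∀ i, (P i).card = k) ∧
    (∀ i j : Fin ℓ, (i : ℕ) + 1 = (j : ℕ) → (P i ∩ P j).card = 1) ∧
    (∀ i j : Fin ℓ, (i : ℕ) + 1 < (j : ℕ) → P i ∩ P j = ∅)

def Ker {V : Type} [DecidableEq V] (m : ℕ) (F : Finset (Finset V)) (A : Finset V) : Prop :=
  ∀ X : Finset V, X.card ≤ m → ∃ E ∈ F, A ⊆ E ∧ Disjoint (E \ A) X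

theorem Ker.mono {V : Type} [DecidableEq V] {m : ℕ} {F G : Finset (Finset V)} {A : Finset V}
    (h : Ker m F A) (hFG : F ⊆ G) : Ker m G A := by
  intro X hX
  obtain ⟨E, hE, h1, h2⟩ := h X hX
  exact ⟨E, hFG hE, h1, h2⟩

theorem path_of {n k L : ℕ} (hk : 2 ≤ k) (F : Finset (Finset (Fin n)))
    (hF : ∀ A ∈ F, A.card = k) (P : ℕ → Finset (Fin n))
    (h0 : ∀ i < L, P i ∈ F) (h1 : ∀ i, i + 1 < L → (P i ∩ P (i + 1)).card = 1)
    (h2 : ∀ i j, i + 1 < j → j < L → P i ∩ P j = ∅) : ContainsLinearPath k L F := by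
  have key : ∀ i j, i < j → j < L → P i ≠ P j := by
    intro i j hij hj he
    have hc := hF _ (h0 j hj)
    by_cases h : i + 1 = j
    · subst h
      have := h1 i hj
      rw [he, inter_self] at this
      omega
    · have := h2 i j (by omega) hj
      rw [he, inter_self] at this
      rw [this] at hc
      simp at hc
      omega
  refine ⟨fun i => P i, ?_, fun i => h0 i i.2, fun i => hF _ (h0 i i.2), ?_, ?_⟩
  · intro i j hij
    simp only at hij
    rcases lt_trichotomy (i : ℕ) j with h | h | h
    · exact absurd hij (key _ _ h j.2)
    · exact Fin.ext h
    · exact absurd hij.symm (key _ _ h i.2)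
  · intro i j hij
    have := h1 i (by omega)
    rw [hij] at this
    exact this
  · intro i j hij
    exact h2 i j hij j.2

theorem embed {V : Type} [DecidableEq V] {m L k : ℕ} (F : Finset (Finset V))
    (hF : ∀ A ∈ F, A.card = k) (K : ℕ → Finset V) (hK : ∀ i < L, Ker m F (K i))
    (U : Finset V) (hU : ∀ i < L, K i ⊆ U) (hm : U.card + L * k ≤ m) :
    ∀ j ≤ L, ∃ E : ℕ → Finset V, (∀ i < j, E i ∈ F ∧ K i ⊆ E i ∧ Disjoint (E i \ K i) U) ∧
      ∀ i i', i < i' → i' < j → E i ∩ E i' = K i ∩ K i' := by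
  intro j
  induction j with
  | zero => intro _; exact ⟨fun _ => ∅, by simp, by simp⟩
  | succ j ih =>
    intro hj
    obtain ⟨E, hE1, hE2⟩ := ih (by omega)
    obtain ⟨e, he, hKe, hd⟩ := hK j (by omega) (U ∪ (range j).biUnion E) (by
      refine (card_union_le _ _).trans ?_
      have : ((range j).biUnion E).card ≤ (range j).card * k :=
        card_biUnion_le_card_mul _ _ _ (fun i hi => (hF _ (hE1 i (by simpa using hi)).1).le)
      rw [card_range] at this
      have h2 : j * k ≤ L * k := Nat.mul_le_mul_right _ (by omega)
      omega)
    rw [disjoint_union_right, disjoint_biUnion_right] at hd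
    refine ⟨Function.update E j e, ?_, ?_⟩
    · intro i hi
      by_cases h : i = j
      · subst h
        simp only [Function.update_self]
        exact ⟨he, hKe, hd.1⟩
      · rw [Function.update_of_ne h]
        exact hE1 i (by omega)
    · intro i i' hii hi'
      rw [Function.update_of_ne (by omega : i ≠ j)]
      by_cases h : i' = j
      · subst h
        rw [Function.update_self]
        obtain ⟨a1, a2, a3⟩ := hE1 i hii
        have a4 := hd.2 i (by simpa using hii)
        have a5 := hU i' (by omega)
        ext x
        simp only [mem_inter]
        constructor
        · rintro ⟨hx1, hx2⟩
          have hx3 : x ∈ K i' := by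
            by_contra hx
            exact disjoint_left.1 a4 (mem_sdiff.2 ⟨hx2, hx⟩) hx1
          refine ⟨?_, hx3⟩
          by_contra hx
          exact disjoint_left.1 a3 (mem_sdiff.2 ⟨hx1, hx⟩) (a5 hx3)
        · rintro ⟨hx1, hx2⟩
          exact ⟨a2 hx1, hKe hx2⟩
      · rw [Function.update_of_ne h]
        exact hE2 i i' hii (by omega)

/-- zigzag of length L in a relation -/
def Zig {V : Type} (R : V → V → Prop) (L : ℕ) (w : ℕ → V) : Prop :=
  (∀ i j, i < j → j ≤ L → w i ≠ w j) ∧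
    ∀ i < L, (Even i → R (w i) (w (i + 1))) ∧ (¬ Even i → R (w (i + 1)) (w i))

def Arr {V : Type} [DecidableEq V] (m : ℕ) (F : Finset (Finset V)) (x y : V) : Prop :=
  Ker m F {x} ∧ Ker m F {x, y}

theorem zig_path {n k t m : ℕ} (hk : 2 ≤ k) (ht : 1 ≤ t) (F : Finset (Finset (Fin n)))
    (hF : ∀ A ∈ F, A.card = k) (hm : (2 * t + 1) + (2 * t + 2) * k ≤ m)
    (w : ℕ → Fin n) (hw : Zig (Arr m F) (2 * t) w) : ContainsLinearPath k (2 * t + 2) F := by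
  classical
  obtain ⟨hinj, hw⟩ := hw
  have hinj' : ∀ i j, i ≤ 2 * t → j ≤ 2 * t → w i = w j → i = j := by
    intro i j hi hj h
    rcases lt_trichotomy i j with h1 | h1 | h1
    · exact absurd h (hinj _ _ h1 hj)
    · exact h1
    · exact absurd h.symm (hinj _ _ h1 hi)
  let I : ℕ → Finset ℕ := fun i => (range (2 * t + 1)).filter (fun j => j = i ∨ j + 1 = i)
  have hI : ∀ i j, j ∈ I i ↔ j ≤ 2 * t ∧ (j = i ∨ j + 1 = i) := by
    intro i j; simp only [I, mem_filter, mem_range]; omega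
  have hKI : ∀ i j, (I i).image w ∩ (I j).image w = (I i ∩ I j).image w := by
    intro i j
    ext x
    simp only [mem_inter, mem_image, hI]
    constructor
    · rintro ⟨⟨a, ha, rfl⟩, ⟨b, hb, hab⟩⟩
      have := hinj' _ _ hb.1 ha.1 hab
      subst this
      exact ⟨b, ⟨ha, hb⟩, rfl⟩
    · rintro ⟨a, ⟨ha, hb⟩, rfl⟩
      exact ⟨⟨a, ha, rfl⟩, ⟨a, hb, rfl⟩⟩
  obtain ⟨E, hE1, hE2⟩ := embed (L := 2 * t + 2) (k := k) (m := m) F hF (fun i => (I i).image w) (by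
      intro i hi
      show Ker m F ((I i).image w)
      by_cases h0 : i = 0
      · subst h0
        have : I 0 = {0} := by ext j; rw [hI]; simp; omega
        rw [this, image_singleton]
        exact ((hw 0 (by omega)).1 (by simp)).1
      by_cases h1 : i = 2 * t + 1
      · subst h1
        have : I (2 * t + 1) = {2 * t} := by ext j; rw [hI]; simp; omega
        rw [this, image_singleton]
        have := ((hw (2 * t - 1) (by omega)).2 (by
          rw [Nat.not_even_iff_odd]; exact ⟨t - 1, by omega⟩)).1
        rwa [show 2 * t - 1 + 1 = 2 * t by omega] at this
      · obtain ⟨j, rfl⟩ : ∃ j, i = j + 1 := ⟨i - 1, by omega⟩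
        have : I (j + 1) = {j, j + 1} := by ext l; rw [hI]; simp; omega
        rw [this, image_insert, image_singleton]
        by_cases he : Even j
        · exact ((hw j (by omega)).1 he).2
        · rw [pair_comm]
          exact ((hw j (by omega)).2 he).2)
      ((range (2 * t + 1)).image w) (fun i _ => image_subset_image (filter_subset _ _))
      (by
        have : ((range (2 * t + 1)).image w).card ≤ 2 * t + 1 := by
          simpa using (card_image_le (s := range (2 * t + 1)) (f := w))
        omega) (2 * t + 2) le_rfl
  refine path_of hk F hF E (fun i hi => (hE1 i hi).1) ?_ ?_
  · intro i hi
    rw [hE2 i (i + 1) (by omega) hi, hKI]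
    have : I i ∩ I (i + 1) = {i} := by
      ext j; rw [mem_inter, hI, hI]; simp; omega
    rw [this]; simp
  · intro i j hij hj
    rw [hE2 i j (by omega) hj, hKI]
    have : I i ∩ I j = ∅ := by
      ext l; rw [mem_inter, hI, hI]; simp; omega
    rw [this]; simp


def res {V : Type} [DecidableEq V] {k : ℕ} (χ : V → Fin k) (A : Finset (Fin k)) (e : Finset V) :
    Finset V := e.filter (fun x => χ x ∈ A)

def Rb {V : Type} {k : ℕ} (χ : V → Fin k) (e : Finset V) : Prop :=
  (∀ x ∈ e, ∀ y ∈ e, χ x = χ y → x = y) ∧ ∀ c, ∃ x ∈ e, χ x = c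

theorem mem_res {V : Type} [DecidableEq V] {k : ℕ} {χ : V → Fin k} {A : Finset (Fin k)}
    {e : Finset V} {x : V} : x ∈ res χ A e ↔ x ∈ e ∧ χ x ∈ A := by simp [res]

theorem res_inter {V : Type} [DecidableEq V] {k : ℕ} {χ : V → Fin k}
    {e e' : Finset V} (he : Rb χ e) : res χ ((e ∩ e').image χ) e = e ∩ e' := by
  ext x
  simp only [mem_res, mem_image, mem_inter]
  constructor
  · rintro ⟨hx, z, ⟨hz, hz'⟩, h⟩
    rw [he.1 _ hx _ hz h.symm]
    exact ⟨hz, hz'⟩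
  · rintro ⟨h1, h2⟩
    exact ⟨h1, x, ⟨h1, h2⟩, rfl⟩

theorem res_sub {V : Type} [DecidableEq V] {k : ℕ} {χ : V → Fin k} {A : Finset (Fin k)}
    {e e' : Finset V} (he : Rb χ e) (he' : Rb χ e') (h : res χ A e' ⊆ e) :
    res χ A e' = res χ A e := by
  ext x
  constructor
  · intro hx
    exact mem_res.2 ⟨h hx, (mem_res.1 hx).2⟩
  · intro hx
    rw [mem_res] at hx
    obtain ⟨z, hz, hzx⟩ := he'.2 (χ x)
    have : z ∈ res χ A e' := mem_res.2 ⟨hz, by rw [hzx]; exact hx.2⟩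
    have h2 := he.1 _ (h this) _ hx.1 hzx
    rwa [← h2]

theorem image_res {V : Type} [DecidableEq V] {k : ℕ} {χ : V → Fin k} {A : Finset (Fin k)}
    {e : Finset V} (he : Rb χ e) : (res χ A e).image χ = A := by
  ext c
  simp only [mem_image, mem_res]
  constructor
  · rintro ⟨x, ⟨_, h⟩, rfl⟩; exact h
  · intro hc
    obtain ⟨x, hx, rfl⟩ := he.2 c
    exact ⟨x, ⟨hx, hc⟩, rfl⟩

theorem peel {V : Type} [DecidableEq V] {k : ℕ} (m : ℕ) (χ : V → Fin k)
    (J : Finset (Finset (Fin k))) (H : Finset (Finset V)) : (∀ e ∈ H, Rb χ e) →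
    ∃ G ⊆ H, (∀ e ∈ G, ∀ A ∈ J, Ker m G (res χ A e)) ∧
      ∃ R : Finset (Fin k) → Finset (Finset V), (∀ A, R A ⊆ H) ∧ H ⊆ G ∪ J.biUnion R ∧
        ∀ A ∈ J, ∀ e ∈ R A, ¬ Ker m (R A) (res χ A e) := by
  induction H using Finset.strongInduction with
  | H H ih =>
    intro hH
    by_cases hg : ∀ e ∈ H, ∀ A ∈ J, Ker m H (res χ A e)
    · exact ⟨H, Subset.rfl, hg, fun _ => ∅, by simp, by simp, by simp⟩
    push Not at hg
    obtain ⟨e, he, A, hA, hker⟩ := hg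
    obtain ⟨G, hGH, hG, R, hR1, hR2, hR3⟩ := ih (H.erase e) (erase_ssubset he)
      (fun e' he' => hH e' (mem_of_mem_erase he'))
    have hRA : insert e (R A) ⊆ H :=
      insert_subset he ((hR1 A).trans (erase_subset _ _))
    refine ⟨G, hGH.trans (erase_subset _ _), hG, Function.update R A (insert e (R A)), ?_, ?_, ?_⟩
    · intro B
      by_cases h : B = A
      · subst h; rw [Function.update_self]; exact hRA
      · rw [Function.update_of_ne h]; exact (hR1 B).trans (erase_subset _ _)
    · intro e' he'
      by_cases h : e' = e
      · subst h
        refine mem_union_right _ (mem_biUnion.2 ⟨A, hA, ?_⟩)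
        rw [Function.update_self]; exact mem_insert_self _ _
      · rcases mem_union.1 (hR2 (mem_erase.2 ⟨h, he'⟩)) with h1 | h1
        · exact mem_union_left _ h1
        · obtain ⟨B, hB, h2⟩ := mem_biUnion.1 h1
          refine mem_union_right _ (mem_biUnion.2 ⟨B, hB, ?_⟩)
          by_cases hBA : B = A
          · subst hBA; rw [Function.update_self]; exact mem_insert_of_mem h2
          · rwa [Function.update_of_ne hBA]
    · intro B hB e' he'
      by_cases h : B = A
      · subst h
        rw [Function.update_self] at he' ⊢
        by_cases hr : res χ B e' = res χ B e
        · rw [hr]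
          exact fun hk => hker (hk.mono hRA)
        · rcases mem_insert.1 he' with h1 | h1
          · exact absurd (by rw [h1]) hr
          · intro hk
            apply hR3 B hB e' h1
            intro X hX
            obtain ⟨E, hE, h3, h4⟩ := hk X hX
            rcases mem_insert.1 hE with h5 | h5
            · subst h5
              exact absurd (res_sub (hH _ he) (hH _ (hRA he')) h3) hr
            · exact ⟨E, h5, h3, h4⟩
      · rw [Function.update_of_ne h] at he' ⊢
        exact hR3 B hB e' he'

theorem thin {V : Type} [DecidableEq V] {k : ℕ} (m : ℕ) (χ : V → Fin k)
    (A : Finset (Fin k)) (R : Finset (Finset V)) (hR : ∀ e ∈ R, Rb χ e)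
    (hK : ∀ e ∈ R, ¬ Ker m R (res χ A e)) :
    ∃ R' ⊆ R, R.card ≤ m * R'.card ∧ ∀ e ∈ R', ∀ e' ∈ R', (e ∩ e').image χ ≠ A := by
  classical
  have h1 : ∀ a ∈ R.image (res χ A), ∃ v : V,
      (R.filter (fun e => res χ A e = a)).card ≤
        m * ((R.filter (fun e => res χ A e = a)).filter (fun e => v ∈ e \ a)).card := by
    intro a ha
    obtain ⟨e, he, rfl⟩ := mem_image.1 ha
    have := hK e he
    unfold Ker at this
    push Not at this
    obtain ⟨X, hX, hX2⟩ := this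
    set Ra := R.filter (fun e' => res χ A e' = res χ A e) with hRa
    have hsub : Ra ⊆ X.biUnion (fun v => Ra.filter (fun e' => v ∈ e' \ res χ A e)) := by
      intro e' he'
      have h3 := mem_filter.1 he'
      have h4 := hX2 e' h3.1 (by rw [← h3.2]; exact filter_subset _ _)
      obtain ⟨v, hv1, hv2⟩ := not_disjoint_iff.1 h4
      exact mem_biUnion.2 ⟨v, hv2, mem_filter.2 ⟨he', hv1⟩⟩
    have hne : X.Nonempty := by
      have : e ∈ Ra := mem_filter.2 ⟨he, rfl⟩
      obtain ⟨v, hv, _⟩ := mem_biUnion.1 (hsub this)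
      exact ⟨v, hv⟩
    obtain ⟨v, hv, hmax⟩ := exists_max_image X
      (fun v => (Ra.filter (fun e' => v ∈ e' \ res χ A e)).card) hne
    refine ⟨v, (card_le_card hsub).trans ((card_biUnion_le_card_mul _ _ _ hmax).trans ?_)⟩
    exact Nat.mul_le_mul_right _ hX
  rcases R.eq_empty_or_nonempty with hRe | ⟨e0, he0⟩
  · subst hRe
    exact ⟨∅, by simp, by simp, by simp⟩
  have : Nonempty V := ⟨(h1 _ (mem_image_of_mem _ he0)).choose⟩
  choose! v hv using h1
  refine ⟨R.filter (fun e => v (res χ A e) ∈ e \ res χ A e), filter_subset _ _, ?_, ?_⟩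
  · rw [card_eq_sum_card_fiberwise (s := R) (t := R.image (res χ A)) (f := res χ A)
      (fun x hx => mem_image_of_mem _ hx)]
    rw [card_eq_sum_card_fiberwise
      (s := R.filter (fun e => v (res χ A e) ∈ e \ res χ A e))
      (t := R.image (res χ A)) (f := res χ A)
      (fun x hx => mem_image_of_mem _ (mem_filter.1 hx).1), mul_sum]
    refine sum_le_sum fun a ha => (hv a ha).trans (Nat.mul_le_mul_left _ (card_le_card ?_))
    intro e he
    simp only [mem_filter] at he ⊢
    obtain ⟨⟨h1, h2⟩, h3⟩ := he
    subst h2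
    exact ⟨⟨h1, h3⟩, rfl⟩
  · intro e he e' he' hA
    rw [mem_filter] at he he'
    have e1 := res_inter (e' := e') (hR e he.1)
    have e2 := res_inter (e' := e) (hR e' he'.1)
    rw [hA] at e1
    rw [inter_comm e', hA] at e2
    have a1 := he.2
    have a2 := he'.2
    rw [e1, mem_sdiff] at a1
    rw [e2, mem_sdiff] at a2
    exact a1.2 (mem_inter.2 ⟨a1.1, a2.1⟩)

theorem homog {V : Type} [DecidableEq V] {k : ℕ} (m : ℕ) (χ : V → Fin k) (j : ℕ) :
    ∀ (J : Finset (Finset (Fin k))) (H : Finset (Finset V)), J.card = j →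
    (∀ e ∈ H, Rb χ e) → (∀ e ∈ H, ∀ e' ∈ H, e ≠ e' → (e ∩ e').image χ ∈ J) →
    ∃ J' ⊆ J, ∃ G ⊆ H, (∀ e ∈ G, ∀ A ∈ J', Ker m G (res χ A e)) ∧
      (∀ e ∈ G, ∀ e' ∈ G, e ≠ e' → (e ∩ e').image χ ∈ J') ∧
      H.card ≤ ((2 ^ 2 ^ k + 1) * (m + 1)) ^ (j + 1) * G.card := by
  induction j with
  | zero =>
    intro J H hJ hH hii
    rw [card_eq_zero] at hJ
    subst hJ
    exact ⟨∅, Subset.rfl, H, Subset.rfl, by simp, hii, Nat.le_mul_of_pos_left _ (by positivity)⟩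
  | succ j ih =>
    intro J H hJ hH hii
    obtain ⟨G, hGH, hG, R, hR1, hR2, hR3⟩ := peel m χ J H hH
    set D := 2 ^ 2 ^ k + 1 with hD
    have hJc : J.card + 1 ≤ D := by
      have h1 : J.card ≤ 2 ^ k := by
        have := card_le_univ J
        simpa using this
      have h2 : 2 ^ k < 2 ^ 2 ^ k := Nat.lt_two_pow_self
      omega
    by_cases hcase : H.card ≤ D * G.card
    · refine ⟨J, Subset.rfl, G, hGH, hG, fun e he e' he' => hii e (hGH he) e' (hGH he'), hcase.trans ?_⟩
      refine Nat.mul_le_mul_right _ ?_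
      calc D ≤ D * (m + 1) := Nat.le_mul_of_pos_right _ (by omega)
        _ ≤ _ := Nat.le_self_pow (by omega) _
    · obtain ⟨A, hA, hAc⟩ : ∃ A ∈ J, H.card ≤ D * (R A).card := by
        by_contra hcon
        push Not at hcon hcase
        have h1 : H.card ≤ G.card + ∑ A ∈ J, (R A).card :=
          (card_le_card hR2).trans ((card_union_le _ _).trans
            (Nat.add_le_add_left card_biUnion_le _))
        have h2 : ∑ A ∈ J, D * (R A).card ≤ J.card * H.card := by
          rw [← smul_eq_mul (a := J.card)]
          exact sum_le_card_nsmul _ _ _ (fun A hA => (hcon A hA).le)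
        rw [← mul_sum] at h2
        have h3 : (J.card + 1) * H.card ≤ D * H.card := Nat.mul_le_mul_right _ hJc
        have h4 := Nat.mul_le_mul_left D h1
        rw [Nat.mul_add] at h4
        rw [Nat.add_mul] at h3
        omega
      obtain ⟨R', hR'R, hR'c, hR'⟩ := thin m χ A (R A) (fun e he => hH e (hR1 A he)) (hR3 A hA)
      obtain ⟨J', hJ', G', hG'R, b1, b2, b3⟩ := ih (J.erase A) R' (by rw [card_erase_of_mem hA]; omega)
        (fun e he => hH e (hR1 A (hR'R he)))
        (fun e he e' he' hne => mem_erase.2 ⟨hR' e he e' he',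
          hii e (hR1 A (hR'R he)) e' (hR1 A (hR'R he')) hne⟩)
      refine ⟨J', hJ'.trans (erase_subset _ _), G', hG'R.trans (hR'R.trans (hR1 A)), b1, b2, ?_⟩
      calc H.card ≤ D * (R A).card := hAc
        _ ≤ D * ((m + 1) * R'.card) := by
            refine Nat.mul_le_mul_left _ (hR'c.trans (Nat.mul_le_mul_right _ (by omega)))
        _ ≤ D * ((m + 1) * ((D * (m + 1)) ^ (j + 1) * G'.card)) := by gcongr
        _ = _ := by ring


theorem rb_count {n k : ℕ} (e : Finset (Fin n)) (he : e.card = k) :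
    k ^ (n - k) ≤ (univ.filter (fun χ : Fin n → Fin k => ∀ x, ∀ y, x ∈ e → y ∈ e → χ x = χ y →
      x = y)).card := by
  classical
  have hc : Fintype.card ({x // x ∉ e} → Fin k) = k ^ (n - k) := by
    rw [Fintype.card_fun, Fintype.card_fin, Fintype.card_subtype_compl]
    simp [he]
  rw [← hc, ← card_univ]
  let q := e.equivFinOfCardEq he
  refine card_le_card_of_injOn
    (fun g x => if h : x ∈ e then q ⟨x, h⟩ else g ⟨x, h⟩) ?_ ?_
  · intro g _
    refine mem_coe.2 (mem_filter.2 ⟨mem_univ _, ?_⟩)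
    intro x y hx hy h
    simp only [hx, hy, dif_pos] at h
    simpa using q.injective h
  · intro g _ g' _ h
    ext1 ⟨x, hx⟩
    have := congrFun h x
    simpa only [hx, dif_neg, not_false_iff] using this

theorem rb_of_inj {n k : ℕ} (e : Finset (Fin n)) (he : e.card = k) (χ : Fin n → Fin k)
    (h : ∀ x, ∀ y, x ∈ e → y ∈ e → χ x = χ y → x = y) : Rb χ e := by
  refine ⟨fun x hx y hy => h x y hx hy, fun c => ?_⟩
  have h1 : (e.image χ).card = k := by
    rw [card_image_of_injOn, he]
    intro x hx y hy; exact h x y hx hy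
  have h2 : e.image χ = univ := by
    apply (card_eq_iff_eq_univ _).1
    simpa using h1
  have : c ∈ e.image χ := by rw [h2]; exact mem_univ _
  simpa using this

theorem coloring {n k : ℕ} (hk : 1 ≤ k) (F : Finset (Finset (Fin n)))
    (hF : ∀ A ∈ F, A.card = k) :
    ∃ χ : Fin n → Fin k, ∃ H ⊆ F, (∀ e ∈ H, Rb χ e) ∧ F.card ≤ k ^ k * H.card := by
  classical
  let H : (Fin n → Fin k) → Finset (Finset (Fin n)) := fun χ =>
    F.filter (fun e => ∀ x, ∀ y, x ∈ e → y ∈ e → χ x = χ y → x = y)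
  suffices h : ∃ χ, F.card ≤ k ^ k * (H χ).card by
    obtain ⟨χ, h⟩ := h
    refine ⟨χ, H χ, filter_subset _ _, fun e he => ?_, h⟩
    rw [mem_filter] at he
    exact rb_of_inj e (hF e he.1) χ he.2
  by_contra hcon
  push Not at hcon
  have hkn : F.Nonempty → k ≤ n := by
    rintro ⟨e, he⟩
    rw [← hF e he]
    simpa using card_le_univ e
  have hne : F.Nonempty := by
    have : Nonempty (Fin k) := ⟨⟨0, hk⟩⟩
    have := hcon (fun _ => Classical.arbitrary _)
    exact card_pos.1 (by omega)
  have h1 : ∑ χ : Fin n → Fin k, (H χ).card =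
      ∑ e ∈ F, (univ.filter (fun χ : Fin n → Fin k => ∀ x, ∀ y, x ∈ e → y ∈ e → χ x = χ y →
      x = y)).card := sum_card_bipartiteAbove_eq_sum_card_bipartiteBelow
        (s := univ) (t := F)
        (fun (χ : Fin n → Fin k) e => ∀ x, ∀ y, x ∈ e → y ∈ e → χ x = χ y → x = y)
  have h2 : F.card * k ^ (n - k) ≤ ∑ χ : Fin n → Fin k, (H χ).card := by
    rw [h1, ← smul_eq_mul]
    exact card_nsmul_le_sum _ _ _ (fun e he => rb_count e (hF e he))
  have h3 : ∑ χ : Fin n → Fin k, k ^ k * (H χ).card < ∑ χ : Fin n → Fin k, F.card := by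
    have : Nonempty (Fin k) := ⟨⟨0, hk⟩⟩
    exact sum_lt_sum_of_nonempty univ_nonempty (fun χ _ => hcon χ)
  rw [← mul_sum] at h3
  simp only [sum_const, card_univ, Fintype.card_fun, Fintype.card_fin, smul_eq_mul] at h3
  have h4 : k ^ n = k ^ k * k ^ (n - k) := by
    rw [← pow_add]; congr 1; have := hkn hne; omega
  rw [h4] at h3
  have := Nat.mul_le_mul_left (k ^ k) h2
  have h5 : k ^ k * (F.card * k ^ (n - k)) = k ^ k * k ^ (n - k) * F.card := by ring
  omega

theorem closed_mem {k : ℕ} (J : Finset (Finset (Fin k)))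
    (hJ : ∀ A ∈ J, ∀ B ∈ J, A ∩ B ∈ J) (B : Finset (Fin k)) (hB : B ≠ univ)
    (h : ∀ x, x ∉ B → ∃ A ∈ J, B ⊆ A ∧ x ∉ A) : B ∈ J := by
  have hx : ∃ x, x ∉ B := by
    by_contra hc; push Not at hc
    exact hB (eq_univ_iff_forall.2 hc)
  obtain ⟨x, hx⟩ := hx
  obtain ⟨A0, hA0, hBA0, _⟩ := h x hx
  obtain ⟨A, hA, hmin⟩ := exists_min_image (J.filter (fun A => B ⊆ A)) card
    ⟨A0, mem_filter.2 ⟨hA0, hBA0⟩⟩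
  rw [mem_filter] at hA
  by_cases hAB : A ⊆ B
  · rw [Subset.antisymm hA.2 hAB]; exact hA.1
  · obtain ⟨y, hy, hyB⟩ := not_subset.1 hAB
    obtain ⟨A', hA', hBA', hy'⟩ := h y hyB
    have h1 := hmin (A ∩ A') (mem_filter.2 ⟨hJ _ hA.1 _ hA', subset_inter hA.2 hBA'⟩)
    have h2 : A ∩ A' ⊂ A := by
      refine ⟨inter_subset_left, fun hs => hy' (mem_inter.1 (hs hy)).2⟩
    have := card_lt_card h2
    omega

theorem types {k : ℕ} (hk : 4 ≤ k) (J : Finset (Finset (Fin k)))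
    (hJ : ∀ A ∈ J, ∀ B ∈ J, A ∩ B ∈ J) (hu : univ ∉ J)
    (hcov : ∀ G : Finset (Fin k), G.card = k - 2 → ∃ A ∈ J, G ⊆ A) :
    (∃ a b, a ≠ b ∧ {a} ∈ J ∧ {b} ∈ J) ∨ ∃ c, {c} ∈ J ∧ ∀ y, y ≠ c → {c, y} ∈ J := by
  classical
  have hne : ∀ B : Finset (Fin k), B.card ≤ 2 → B ≠ univ := by
    rintro B hB rfl
    simp at hB
    omega
  have pair : ∀ v w, v ≠ w → univ.erase v ∉ J → univ.erase w ∉ J → ({v, w} : Finset (Fin k))ᶜ ∈ J := by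
    intro v w hvw hv hw
    obtain ⟨A, hA, hsub⟩ := hcov ({v, w} : Finset (Fin k))ᶜ (by
      rw [card_compl, card_pair hvw]; simp)
    have hsub' : ∀ x, x ≠ v → x ≠ w → x ∈ A := by
      intro x h1 h2; exact hsub (by simp [h1, h2])
    have h1 : v ∉ A := by
      intro hvA
      by_cases hwA : w ∈ A
      · apply hu
        rwa [← show A = univ from eq_univ_iff_forall.2 (fun x => by
          by_cases h1 : x = v
          · rwa [h1]
          by_cases h2 : x = w
          · rwa [h2]
          exact hsub' x h1 h2)]
      · apply hw
        rwa [← show A = univ.erase w from by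
          ext x
          simp only [mem_erase, mem_univ, and_true]
          refine ⟨fun hx h => hwA (h ▸ hx), fun hx => ?_⟩
          by_cases h1 : x = v
          · rwa [h1]
          exact hsub' x h1 hx]
    have h2 : w ∉ A := by
      intro hwA
      apply hv
      rwa [← show A = univ.erase v from by
          ext x
          simp only [mem_erase, mem_univ, and_true]
          refine ⟨fun hx h => h1 (h ▸ hx), fun hx => ?_⟩
          by_cases h1 : x = w
          · rwa [h1]
          exact hsub' x hx h1]
    rwa [← show A = ({v, w} : Finset (Fin k))ᶜ from by
      refine Subset.antisymm (fun x hx => ?_) hsub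
      simp only [mem_compl, mem_insert, mem_singleton, not_or]
      exact ⟨fun h => h1 (h ▸ hx), fun h => h2 (h ▸ hx)⟩]
  have single : ∀ u, (∀ x, x ≠ u → univ.erase x ∉ J → ∃ w, w ≠ x ∧ w ≠ u ∧ univ.erase w ∉ J) →
      {u} ∈ J := by
    intro u hu'
    apply closed_mem J hJ _ (hne _ (by simp))
    intro x hx
    rw [mem_singleton] at hx
    by_cases hxJ : univ.erase x ∈ J
    · exact ⟨_, hxJ, by simpa using fun h => hx h.symm, by simp⟩
    · obtain ⟨w, h1, h2, h3⟩ := hu' x hx hxJ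
      exact ⟨_, pair x w h1.symm hxJ h3, by
        simp only [singleton_subset_iff, mem_compl, mem_insert, mem_singleton, not_or]
        exact ⟨fun h => hx h.symm, fun h => h2 h.symm⟩, by simp⟩
  by_cases h2 : ∃ v w, v ≠ w ∧ univ.erase v ∉ J ∧ univ.erase w ∉ J
  · left
    obtain ⟨v, w, hvw, hv, hw⟩ := h2
    by_cases h3 : ∃ z, z ≠ v ∧ z ≠ w ∧ univ.erase z ∉ J
    · obtain ⟨z, hzv, hzw, hz⟩ := h3
      refine ⟨v, w, hvw, single v fun x hx _ => ?_, single w fun x hx _ => ?_⟩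
      · by_cases h : x = w
        · exact ⟨z, by rwa [h], hzv, hz⟩
        · exact ⟨w, fun h' => h h'.symm, hvw.symm, hw⟩
      · by_cases h : x = v
        · exact ⟨z, by rwa [h], hzw, hz⟩
        · exact ⟨v, fun h' => h h'.symm, hvw, hv⟩
    · push Not at h3
      have hcard : 1 < (({v, w} : Finset (Fin k))ᶜ).card := by
        rw [card_compl, card_pair hvw]; simp; omega
      obtain ⟨a, ha, b, hb, hab⟩ := one_lt_card.1 hcard
      have key : ∀ a, a ∈ ({v, w} : Finset (Fin k))ᶜ → {a} ∈ J := by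
        intro a ha
        simp only [mem_compl, mem_insert, mem_singleton, not_or] at ha
        refine single a fun x hx hxJ => ?_
        by_cases h : x = v
        · exact ⟨w, by rw [h]; exact hvw.symm, fun h => ha.2 h.symm, hw⟩
        · by_cases h' : x = w
          · exact ⟨v, by rw [h']; exact hvw, fun h => ha.1 h.symm, hv⟩
          · exact absurd (h3 x h h') hxJ
      exact ⟨a, b, hab, key a ha, key b hb⟩
  · right
    push Not at h2
    obtain ⟨c, hc⟩ : ∃ c : Fin k, ∀ x, x ≠ c → univ.erase x ∈ J := by
      by_cases h : ∃ c, univ.erase c ∉ J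
      · obtain ⟨c, hc⟩ := h
        refine ⟨c, fun x hx => ?_⟩
        exact h2 c x hx.symm hc
      · push Not at h
        exact ⟨⟨0, by omega⟩, fun x _ => h x⟩
    refine ⟨c, closed_mem J hJ _ (hne _ (by simp)) fun x hx => ?_,
      fun y hy => closed_mem J hJ _ (hne _ card_le_two) fun x hx => ?_⟩
    · rw [mem_singleton] at hx
      exact ⟨_, hc x hx, by simpa using fun h => hx h.symm, by simp⟩
    · simp only [mem_insert, mem_singleton, not_or] at hx
      refine ⟨_, hc x hx.1, ?_, by simp⟩
      intro z hz
      simp only [mem_insert, mem_singleton] at hz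
      simp only [mem_erase, mem_univ, and_true]
      rintro rfl
      rcases hz with h | h
      · exact hx.1 h
      · exact hx.2 h

theorem closed_of {V : Type} [DecidableEq V] {k m : ℕ} {χ : V → Fin k}
    {J : Finset (Finset (Fin k))} {G : Finset (Finset V)} (hGc : ∀ e ∈ G, e.card = k)
    (hrb : ∀ e ∈ G, Rb χ e)
    (hi : ∀ e ∈ G, ∀ A ∈ J, Ker m G (res χ A e))
    (hii : ∀ e ∈ G, ∀ e' ∈ G, e ≠ e' → (e ∩ e').image χ ∈ J)
    (hm : 2 * k ≤ m) (hu : univ ∉ J) (hne : G.Nonempty) : ∀ A ∈ J, ∀ B ∈ J, A ∩ B ∈ J := by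
  intro A hA B hB
  obtain ⟨e, he⟩ := hne
  obtain ⟨E, hE, hE1, hE2⟩ := hi e he A hA e (by rw [hGc e he]; omega)
  obtain ⟨E', hE', hE1', hE2'⟩ := hi e he B hB (e ∪ E) ((card_union_le _ _).trans (by
    rw [hGc e he, hGc E hE]; omega))
  have key : E ∩ E' = res χ (A ∩ B) e := by
    ext x
    rw [mem_inter, mem_res, mem_inter]
    constructor
    · rintro ⟨h1, h2⟩
      have h3 : x ∈ res χ B e := by
        by_contra hx
        exact disjoint_left.1 hE2' (mem_sdiff.2 ⟨h2, hx⟩) (mem_union_right _ h1)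
      have h4 : x ∈ res χ A e := by
        by_contra hx
        exact disjoint_left.1 hE2 (mem_sdiff.2 ⟨h1, hx⟩) (mem_res.1 h3).1
      exact ⟨(mem_res.1 h3).1, (mem_res.1 h4).2, (mem_res.1 h3).2⟩
    · rintro ⟨h1, h2, h3⟩
      exact ⟨hE1 (mem_res.2 ⟨h1, h2⟩), hE1' (mem_res.2 ⟨h1, h3⟩)⟩
  have him := image_res (A := A ∩ B) (hrb e he)
  rw [← key] at him
  by_cases hEE : E = E'
  · exfalso
    rw [← hEE, inter_self] at him
    have h1 : E.image χ = univ := eq_univ_iff_forall.2 fun c => by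
      obtain ⟨x, hx, rfl⟩ := (hrb E hE).2 c
      exact mem_image_of_mem _ hx
    rw [h1] at him
    have h2 : A = univ := by
      apply eq_univ_iff_forall.2
      intro x
      have : x ∈ A ∩ B := by rw [← him]; exact mem_univ _
      exact (mem_inter.1 this).1
    exact hu (h2 ▸ hA)
  · rw [← him]
    exact hii E hE E' hE' hEE

theorem res_singleton {V : Type} [DecidableEq V] {k : ℕ} {χ : V → Fin k} {c : Fin k}
    {e : Finset V} (he : Rb χ e) : (res χ {c} e).card = 1 := by
  have h := image_res (A := {c}) he
  rw [← card_image_of_injOn (s := res χ {c} e) (f := χ), h, card_singleton]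
  intro x hx y hy
  exact he.1 x (mem_res.1 hx).1 y (mem_res.1 hy).1

theorem two_single {n k m : ℕ} (L : ℕ) {χ : Fin n → Fin k}
    {G : Finset (Finset (Fin n))} (hGc : ∀ e ∈ G, e.card = k) (hk : 2 ≤ k)
    (hrb : ∀ e ∈ G, Rb χ e) (hne : G.Nonempty) (a : ℕ → Fin k) (ha : ∀ i, a i ≠ a (i + 1))
    (hi : ∀ e ∈ G, ∀ i, Ker m G (res χ {a i} e))
    (hm : L * k ≤ m) : ContainsLinearPath k L G := by
  have key : ∀ l ≤ L, ∃ P : ℕ → Finset (Fin n), (∀ i < l, P i ∈ G) ∧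
      (∀ i, i + 1 < l → P i ∩ P (i + 1) = res χ {a i} (P i)) ∧
      ∀ i j, i + 1 < j → j < l → P i ∩ P j = ∅ := by
    intro l
    induction l with
    | zero => exact fun _ => ⟨fun _ => ∅, by simp, by simp, by simp⟩
    | succ l ih =>
      intro hl
      obtain ⟨P, h0, h1, h2⟩ := ih (by omega)
      by_cases hl0 : l = 0
      · subst hl0
        obtain ⟨e, he⟩ := hne
        exact ⟨fun _ => e, fun _ _ => he, fun i hi => by omega, fun i j _ _ => by omega⟩
      obtain ⟨p, rfl⟩ : ∃ p, l = p + 1 := ⟨l - 1, by omega⟩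
      obtain ⟨E, hE, hE1, hE2⟩ := hi (P p) (h0 p (by omega)) p ((range (p + 1)).biUnion P) (by
        have : ((range (p + 1)).biUnion P).card ≤ (range (p + 1)).card * k :=
          card_biUnion_le_card_mul _ _ _ (fun i hi => (hGc _ (h0 i (by simpa using hi))).le)
        rw [card_range] at this
        have h2 : (p + 1) * k ≤ L * k := Nat.mul_le_mul_right _ (by omega)
        omega)
      rw [disjoint_biUnion_right] at hE2
      have hin : ∀ i ≤ p, P i ∩ E = P i ∩ res χ {a p} (P p) := by
        intro i hip
        ext x
        simp only [mem_inter]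
        refine ⟨fun ⟨hx1, hx2⟩ => ⟨hx1, ?_⟩, fun ⟨hx1, hx2⟩ => ⟨hx1, hE1 hx2⟩⟩
        by_contra hx
        exact disjoint_left.1 (hE2 i (by simp; omega)) (mem_sdiff.2 ⟨hx2, hx⟩) hx1
      refine ⟨Function.update P (p + 1) E, ?_, ?_, ?_⟩
      · intro i hi
        by_cases h : i = p + 1
        · subst h; rw [Function.update_self]; exact hE
        · rw [Function.update_of_ne h]; exact h0 i (by omega)
      · intro i hi
        rw [Function.update_of_ne (by omega : i ≠ p + 1)]
        by_cases h : i = p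
        · subst h
          rw [Function.update_self, hin i le_rfl]
          exact inter_eq_right.2 (filter_subset _ _)
        · rw [Function.update_of_ne (by omega)]
          exact h1 i (by omega)
      · intro i j hij hj
        rw [Function.update_of_ne (by omega : i ≠ p + 1)]
        by_cases h : j = p + 1
        · subst h
          rw [Function.update_self, hin i (by omega)]
          apply eq_empty_of_forall_notMem
          intro x hx
          rw [mem_inter, mem_res] at hx
          by_cases hip : i + 1 = p
          · subst hip
            have : x ∈ res χ {a i} (P i) := by
              rw [← h1 i (by omega)]; exact mem_inter.2 ⟨hx.1, hx.2.1⟩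
            have h5 := (mem_res.1 this).2
            have h6 := hx.2.2
            rw [mem_singleton] at h5 h6
            exact ha i (h5.symm.trans h6)
          · have := h2 i p (by omega) (by omega)
            have hx' : x ∈ P i ∩ P p := mem_inter.2 ⟨hx.1, hx.2.1⟩
            rw [this] at hx'
            simp at hx'
        · rw [Function.update_of_ne h]
          exact h2 i j hij (by omega)
  obtain ⟨P, h0, h1, h2⟩ := key L le_rfl
  refine path_of hk G hGc P h0 (fun i hi => ?_) h2
  rw [h1 i hi]
  exact res_singleton (hrb _ (h0 i (by omega)))

theorem ContainsLinearPath.mono {n k L : ℕ} {F G : Finset (Finset (Fin n))}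
    (h : ContainsLinearPath k L G) (hG : G ⊆ F) : ContainsLinearPath k L F := by
  obtain ⟨P, a, b, c⟩ := h
  exact ⟨P, a, fun i => hG (b i), c⟩

def Ctr {V : Type} [DecidableEq V] (m : ℕ) (F : Finset (Finset V)) (e : Finset V) (c : V) : Prop :=
  c ∈ e ∧ ∀ y ∈ e, y ≠ c → Arr m F c y

theorem bad_bound {n k m L : ℕ} (hk : 4 ≤ k) (F H : Finset (Finset (Fin n)))
    (hF : ∀ A ∈ F, A.card = k) (hm : 2 * k ≤ m) (hmL : L * k ≤ m)
    (hP : ¬ ContainsLinearPath k L F) (hHF : H ⊆ F)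
    (hH : ∀ e ∈ H, ∀ c, ¬ Ctr m F e c) :
    H.card ≤ k ^ k * (((2 ^ 2 ^ k + 1) * (m + 1)) ^ (2 ^ k + 1) * n ^ (k - 2)) := by
  classical
  obtain ⟨χ, H1, hH1, hrb, hc1⟩ := coloring (by omega) H (fun A hA => hF A (hHF hA))
  refine hc1.trans (Nat.mul_le_mul_left _ ?_)
  set J0 : Finset (Finset (Fin k)) := univ.erase univ with hJ0
  have hJ0c : J0.card + 1 ≤ 2 ^ k + 1 := by
    have := card_le_univ J0
    simp at this
    omega
  obtain ⟨J, hJJ, G, hGH, hi, hii, hc⟩ := homog m χ J0.card J0 H1 rfl hrb (by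
    intro e he e' he' hne
    refine mem_erase.2 ⟨fun h => hne ?_, mem_univ _⟩
    have h1 := res_inter (e' := e') (hrb e he)
    have h2 := res_inter (e' := e) (hrb e' he')
    rw [h] at h1
    rw [inter_comm e', h] at h2
    have h3 : ∀ d : Finset (Fin n), res χ univ d = d := by intro d; simp [res]
    rw [h3] at h1 h2
    exact h1.trans h2.symm)
  refine hc.trans (Nat.mul_le_mul (Nat.pow_le_pow_right (by positivity) hJ0c) ?_)
  rcases G.eq_empty_or_nonempty with hGe | hGne
  · simp [hGe]
  have hGF : G ⊆ F := hGH.trans (hH1.trans hHF)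
  have hGc : ∀ e ∈ G, e.card = k := fun e he => hF e (hGF he)
  have hGrb : ∀ e ∈ G, Rb χ e := fun e he => hrb e (hGH he)
  have hu : univ ∉ J := fun h => (mem_erase.1 (hJJ h)).1 rfl
  have hcl := closed_of hGc hGrb hi hii hm hu hGne
  by_cases hcov : ∀ D : Finset (Fin k), D.card = k - 2 → ∃ A ∈ J, D ⊆ A
  · exfalso
    rcases types hk J hcl hu hcov with ⟨a, b, hab, ha, hb⟩ | ⟨c, hc, hcy⟩
    · apply hP
      refine (two_single (m := m) L hGc (by omega) hGrb hGne (fun i => if Even i then a else b) ?_ ?_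
        hmL).mono hGF
      · intro i
        by_cases h : Even i
        · simp [h, Nat.even_add_one, hab]
        · simp [h, Nat.even_add_one, hab.symm]
      · intro e he i
        by_cases h : Even i
        · simpa [h] using hi e he _ ha
        · simpa [h] using hi e he _ hb
    · obtain ⟨e, he⟩ := hGne
      obtain ⟨x, hx, hxc⟩ := (hGrb e he).2 c
      apply hH e (hH1 (hGH he)) x
      have hinj := (hGrb e he).1
      have e1 : res χ {c} e = {x} := by
        ext z
        rw [mem_res, mem_singleton, mem_singleton]
        refine ⟨fun ⟨h1, h2⟩ => hinj _ h1 _ hx (by rw [h2, hxc]), ?_⟩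
        rintro rfl
        exact ⟨hx, hxc⟩
      refine ⟨hx, fun y hy hyx => ⟨?_, ?_⟩⟩
      · rw [← e1]
        exact (hi e he _ hc).mono hGF
      · have e2 : res χ {c, χ y} e = {x, y} := by
          ext z
          rw [mem_res, mem_insert, mem_singleton, mem_insert, mem_singleton]
          constructor
          · rintro ⟨h1, h2 | h2⟩
            · left; exact hinj _ h1 _ hx (by rw [h2, hxc])
            · right; exact hinj _ h1 _ hy h2
          · rintro (rfl | rfl)
            · exact ⟨hx, Or.inl hxc⟩
            · exact ⟨hy, Or.inr rfl⟩
        rw [← e2]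
        refine (hi e he _ (hcy _ fun h => hyx ?_)).mono hGF
        exact hinj _ hy _ hx (by rw [h, hxc])
  · push Not at hcov
    obtain ⟨D, hD, hDJ⟩ := hcov
    have hinj : Set.InjOn (res χ D) (G : Set (Finset (Fin n))) := by
      intro e he e' he' h
      by_contra hne
      refine hDJ _ (hii e he e' he' hne) ?_
      rw [← image_res (A := D) (hGrb e he)]
      refine image_subset_image (subset_inter (filter_subset _ _) ?_)
      rw [h]
      exact filter_subset _ _
    have h1 : G.card ≤ (powersetCard (k - 2) (univ : Finset (Fin n))).card := by
      refine card_le_card_of_injOn (res χ D) ?_ hinj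
      intro e he
      refine mem_coe.2 (mem_powersetCard.2 ⟨subset_univ _, ?_⟩)
      rw [← hD, ← image_res (A := D) (hGrb e he), card_image_of_injOn]
      · rw [image_res (hGrb e he)]
      · intro x hx y hy
        exact (hGrb e he).1 x (mem_res.1 hx).1 y (mem_res.1 hy).1
    rw [card_powersetCard, card_univ, Fintype.card_fin] at h1
    exact h1.trans (Nat.choose_le_pow _ _)


theorem zig_exists {V : Type} [DecidableEq V] (A : Finset (V × V)) (hA : A.Nonempty) (L : ℕ)
    (h1 : ∀ p ∈ A, L + 1 ≤ (A.filter (fun q => q.1 = p.1)).card)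
    (h2 : ∀ p ∈ A, L + 1 ≤ (A.filter (fun q => q.2 = p.2)).card) :
    ∃ w, Zig (fun x y => (x, y) ∈ A) L w := by
  have key : ∀ j ≤ L, ∃ w : ℕ → V, Zig (fun x y => (x, y) ∈ A) j w ∧
      (Even j → ∃ y, (w j, y) ∈ A) ∧ (¬ Even j → ∃ x, (x, w j) ∈ A) := by
    intro j
    induction j with
    | zero =>
      intro _
      obtain ⟨p, hp⟩ := hA
      exact ⟨fun _ => p.1, ⟨fun i j _ _ => by omega, fun i hi => by omega⟩,
        fun _ => ⟨p.2, hp⟩, fun h => absurd (by simp) h⟩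
    | succ j ih =>
      intro hj
      obtain ⟨w, ⟨hw1, hw2⟩, hw3, hw4⟩ := ih (by omega)
      have hU : ((range (j + 1)).image w).card < L + 1 := by
        have := card_image_le (s := range (j + 1)) (f := w)
        rw [card_range] at this
        omega
      obtain ⟨v, hv, hv1, hv2⟩ : ∃ v, v ∉ (range (j + 1)).image w ∧
          (Even j → (w j, v) ∈ A) ∧ (¬ Even j → (v, w j) ∈ A) := by
        by_cases he : Even j
        · obtain ⟨y, hy⟩ := hw3 he
          have hc := h1 _ hy
          have : ((range (j + 1)).image w).card <
              ((A.filter (fun q => q.1 = w j)).image Prod.snd).card := by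
            rw [card_image_of_injOn (f := Prod.snd)]
            · exact lt_of_lt_of_le hU hc
            · intro p hp q hq hpq
              have a1 := (mem_filter.1 hp).2
              have a2 := (mem_filter.1 hq).2
              exact Prod.ext (a1.trans a2.symm) hpq
          obtain ⟨v, hv1, hv2⟩ := exists_mem_notMem_of_card_lt_card this
          obtain ⟨p, hp, rfl⟩ := mem_image.1 hv1
          rw [mem_filter] at hp
          refine ⟨p.2, hv2, fun _ => ?_, fun h => absurd he h⟩
          rw [← hp.2]; exact hp.1
        · obtain ⟨y, hy⟩ := hw4 he
          have hc := h2 _ hy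
          have : ((range (j + 1)).image w).card <
              ((A.filter (fun q => q.2 = w j)).image Prod.fst).card := by
            rw [card_image_of_injOn (f := Prod.fst)]
            · exact lt_of_lt_of_le hU hc
            · intro p hp q hq hpq
              have a1 := (mem_filter.1 hp).2
              have a2 := (mem_filter.1 hq).2
              exact Prod.ext hpq (a1.trans a2.symm)
          obtain ⟨v, hv1, hv2⟩ := exists_mem_notMem_of_card_lt_card this
          obtain ⟨p, hp, rfl⟩ := mem_image.1 hv1
          rw [mem_filter] at hp
          refine ⟨p.1, hv2, fun h => absurd h he, fun _ => ?_⟩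
          rw [← hp.2]; exact hp.1
      have hup : ∀ i, i ≤ j → Function.update w (j + 1) v i = w i := fun i hi =>
        Function.update_of_ne (by omega) _ _
      refine ⟨Function.update w (j + 1) v, ⟨?_, ?_⟩, ?_, ?_⟩
      · intro a b hab hb
        rw [hup a (by omega)]
        by_cases h : b = j + 1
        · subst h
          rw [Function.update_self]
          intro h
          exact hv (mem_image.2 ⟨a, by simpa using hab, h⟩)
        · rw [hup b (by omega)]
          exact hw1 a b hab (by omega)
      · intro i hi
        rw [hup i (by omega)]
        by_cases h : i = j
        · subst h
          rw [Function.update_self]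
          exact ⟨hv1, hv2⟩
        · rw [hup (i + 1) (by omega)]
          exact hw2 i (by omega)
      · intro he
        rw [Function.update_self]
        exact ⟨w j, hv2 (by simpa [Nat.even_add_one] using he)⟩
      · intro he
        rw [Function.update_self]
        exact ⟨w j, hv1 (by simpa [Nat.even_add_one] using he)⟩
  obtain ⟨w, hw, _⟩ := key L le_rfl
  exact ⟨w, hw⟩

theorem arrow_bound {V : Type} [DecidableEq V] (L : ℕ) (A : Finset (V × V)) :
    (¬ ∃ w, Zig (fun x y => (x, y) ∈ A) L w) →
    A.card ≤ (L + 1) * ((A.image Prod.fst).card + (A.image Prod.snd).card) := by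
  induction A using Finset.strongInduction with
  | H A ih =>
    intro hz
    rcases A.eq_empty_or_nonempty with rfl | hA
    · simp
    have hmono : ∀ B ⊆ A, ¬ ∃ w, Zig (fun x y => (x, y) ∈ B) L w := by
      rintro B hB ⟨w, h1, h2⟩
      exact hz ⟨w, h1, fun i hi => ⟨fun h => hB ((h2 i hi).1 h), fun h => hB ((h2 i hi).2 h)⟩⟩
    by_cases h1 : ∀ p ∈ A, L + 1 ≤ (A.filter (fun q => q.1 = p.1)).card
    · by_cases h2 : ∀ p ∈ A, L + 1 ≤ (A.filter (fun q => q.2 = p.2)).card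
      · exact absurd (zig_exists A hA L h1 h2) hz
      · push Not at h2
        obtain ⟨p, hp, hpc⟩ := h2
        set B := A.filter (fun q => ¬ q.2 = p.2) with hB
        have hBA : B ⊂ A := filter_ssubset.2 ⟨p, hp, by simp⟩
        have := ih B hBA (hmono B hBA.subset)
        have hs := card_filter_add_card_filter_not (s := A) (fun q => q.2 = p.2)
        rw [← hB] at hs
        have i1 : (B.image Prod.fst).card ≤ (A.image Prod.fst).card :=
          card_le_card (image_subset_image hBA.subset)
        have i2 : (B.image Prod.snd).card + 1 ≤ (A.image Prod.snd).card := by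
          apply card_lt_card
          refine ⟨image_subset_image hBA.subset, fun h => ?_⟩
          obtain ⟨q, hq, hqp⟩ := mem_image.1 (h (mem_image_of_mem _ hp))
          exact (mem_filter.1 hq).2 hqp
        have : (L + 1) * ((B.image Prod.fst).card + (B.image Prod.snd).card + 1) ≤
          (L + 1) * ((A.image Prod.fst).card + (A.image Prod.snd).card) :=
            Nat.mul_le_mul_left _ (by omega)
        rw [Nat.mul_add _ _ 1] at this
        omega
    · push Not at h1
      obtain ⟨p, hp, hpc⟩ := h1
      set B := A.filter (fun q => ¬ q.1 = p.1) with hB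
      have hBA : B ⊂ A := filter_ssubset.2 ⟨p, hp, by simp⟩
      have := ih B hBA (hmono B hBA.subset)
      have hs := card_filter_add_card_filter_not (s := A) (fun q => q.1 = p.1)
      rw [← hB] at hs
      have i1 : (B.image Prod.snd).card ≤ (A.image Prod.snd).card :=
        card_le_card (image_subset_image hBA.subset)
      have i2 : (B.image Prod.fst).card + 1 ≤ (A.image Prod.fst).card := by
        apply card_lt_card
        refine ⟨image_subset_image hBA.subset, fun h => ?_⟩
        obtain ⟨q, hq, hqp⟩ := mem_image.1 (h (mem_image_of_mem _ hp))
        exact (mem_filter.1 hq).2 hqp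
      have : (L + 1) * ((B.image Prod.fst).card + (B.image Prod.snd).card + 1) ≤
        (L + 1) * ((A.image Prod.fst).card + (A.image Prod.snd).card) :=
          Nat.mul_le_mul_left _ (by omega)
      rw [Nat.mul_add _ _ 1] at this
      omega

theorem enum {V : Type} (T : Finset V) (hT : T.Nonempty) : ∃ x : ℕ → V,
    (∀ i < T.card, x i ∈ T) ∧ ∀ i j, i < T.card → j < T.card → x i = x j → i = j := by
  obtain ⟨d, hd⟩ := hT
  let q := T.equivFin
  refine ⟨fun i => if h : i < T.card then q.symm ⟨i, h⟩ else d, ?_, ?_⟩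
  · intro i hi
    simp [hi]
  · intro i j hi hj h
    simp only [hi, hj, dif_pos] at h
    have := q.symm.injective (Subtype.ext h)
    simpa using this

theorem zig_of_complete {V : Type} [DecidableEq V] (R : V → V → Prop) (t : ℕ) (ht : 1 ≤ t)
    (T W : Finset V) (hT : T.card = t + 1) (hW : t ≤ W.card) (hd : Disjoint T W)
    (h : ∀ x ∈ T, ∀ y ∈ W, R x y) : ∃ w, Zig R (2 * t) w := by
  obtain ⟨x, hx1, hx2⟩ := enum T (card_pos.1 (by omega))
  obtain ⟨y, hy1, hy2⟩ := enum W (card_pos.1 (by omega))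
  have hev : ∀ i, Even i ↔ i % 2 = 0 := fun i => Nat.even_iff
  have hxT : ∀ i, i ≤ 2 * t → x (i / 2) ∈ T := fun i hi => hx1 _ (by omega)
  have hyW : ∀ i, i ≤ 2 * t → ¬ Even i → y (i / 2) ∈ W := fun i hi h => hy1 _ (by
    rw [hev] at h; omega)
  refine ⟨fun i => if Even i then x (i / 2) else y (i / 2), ?_, ?_⟩
  · intro i j hij hj
    have hdis := disjoint_left.1 hd
    by_cases hi : Even i <;> by_cases hj' : Even j <;> simp only [hi, hj', if_true, if_false]
    · intro he
      have := hx2 _ _ (by omega) (by omega) he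
      rw [hev] at hi hj'
      omega
    · intro he
      exact hdis (hxT i (by omega)) (he ▸ hyW j hj hj')
    · intro he
      exact hdis (hxT j (by omega)) (he ▸ hyW i (by omega) hi)
    · intro he
      rw [hev] at hi hj'
      have := hy2 _ _ (by omega) (by omega) he
      omega
  · intro i hi
    refine ⟨fun he => ?_, fun he => ?_⟩
    · have h1 : ¬ Even (i + 1) := by simpa [Nat.even_add_one] using he
      simp only [he, h1, if_true, if_false]
      exact h _ (hxT i (by omega)) _ (hyW (i + 1) (by omega) h1)
    · have h1 : Even (i + 1) := by simpa [Nat.even_add_one] using he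
      simp only [he, h1, if_true, if_false]
      exact h _ (hxT (i + 1) (by omega)) _ (hyW i (by omega) he)

theorem contain_count {n r : ℕ} (Y : Finset (Fin n)) (z : Fin n) (P : Finset (Finset (Fin n)))
    (hP : ∀ f ∈ P, f.card = r ∧ z ∈ f ∧ f ⊆ Y) : P.card ≤ (Y.card - 1).choose (r - 1) := by
  by_cases hz : z ∈ Y
  · rw [← card_erase_of_mem hz, ← card_powersetCard]
    refine card_le_card_of_injOn (fun f => f.erase z) ?_ ?_
    · intro f hf
      obtain ⟨h1, h2, h3⟩ := hP f hf
      refine mem_coe.2 (mem_powersetCard.2 ⟨erase_subset_erase _ h3, ?_⟩)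
      rw [card_erase_of_mem h2, h1]
    · intro f hf g hg h
      simp only at h
      rw [← insert_erase (hP f hf).2.1, h, insert_erase (hP g hg).2.1]
  · have : P = ∅ := by
      apply eq_empty_of_forall_notMem
      intro f hf
      exact hz ((hP f hf).2.2 (hP f hf).2.1)
    simp [this]

theorem meet_count {n r : ℕ} (Z : Finset (Fin n)) (P : Finset (Finset (Fin n)))
    (hP : ∀ f ∈ P, f.card = r ∧ ¬ Disjoint f Z) : P.card ≤ Z.card * n ^ (r - 1) := by
  classical
  have h1 : P ⊆ Z.biUnion (fun z => P.filter (fun f => z ∈ f)) := by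
    intro f hf
    obtain ⟨z, hz1, hz2⟩ := not_disjoint_iff.1 (hP f hf).2
    exact mem_biUnion.2 ⟨z, hz2, mem_filter.2 ⟨hf, hz1⟩⟩
  refine (card_le_card h1).trans (card_biUnion_le_card_mul _ _ _ fun z _ => ?_)
  refine (contain_count (r := r) univ z _ fun f hf => ?_).trans ?_
  · rw [mem_filter] at hf
    exact ⟨(hP f hf.1).1, hf.2, subset_univ _⟩
  · rw [card_univ, Fintype.card_fin]
    exact (Nat.choose_le_pow _ _).trans (Nat.pow_le_pow_left (by omega) _)

theorem choose_ratio (a b s : ℕ) (hab : a ≤ b) (hs : 1 ≤ s) :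
    a.choose s * b ≤ a * b.choose s := by
  obtain ⟨s, rfl⟩ : ∃ u, s = u + 1 := ⟨s - 1, by omega⟩
  rcases Nat.eq_zero_or_pos a with rfl | ha
  · simp
  obtain ⟨a, rfl⟩ : ∃ u, a = u + 1 := ⟨a - 1, by omega⟩
  obtain ⟨b, rfl⟩ : ∃ u, b = u + 1 := ⟨b - 1, by omega⟩
  have h1 := Nat.add_one_mul_choose_eq a s
  have h2 := Nat.add_one_mul_choose_eq b s
  have h3 : a.choose s ≤ b.choose s := Nat.choose_le_choose _ (by omega)
  have : 0 < s + 1 := by omega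
  refine Nat.le_of_mul_le_mul_right ?_ this
  calc (a + 1).choose (s + 1) * (b + 1) * (s + 1)
      = ((a + 1).choose (s + 1) * (s + 1)) * (b + 1) := by ring
    _ = (a + 1) * a.choose s * (b + 1) := by rw [← h1]
    _ ≤ (a + 1) * b.choose s * (b + 1) := by gcongr
    _ = (a + 1) * ((b + 1) * b.choose s) := by ring
    _ = (a + 1) * ((b + 1).choose (s + 1) * (s + 1)) := by rw [h2]
    _ = _ := by ring

/-- classes: a family of r-sets each inside one class -/
theorem class_count {n r y : ℕ} (hr : 2 ≤ r) (hn : 1 ≤ n) (P : Finset (Finset (Fin n)))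
    (hPr : ∀ f ∈ P, f.card = r) (cl : Fin n → Finset (Fin n))
    (hcl : ∀ f ∈ P, ∀ x ∈ f, f ⊆ cl x) (hy1 : 1 ≤ y) (hyn : y ≤ n)
    (hy : ∀ f ∈ P, ∀ x ∈ f, (cl x).card ≤ y) :
    P.card * n ≤ n.choose r * y := by
  classical
  have hPN : P.card ≤ n.choose r := by
    have : P ⊆ powersetCard r univ := fun f hf => mem_powersetCard.2 ⟨subset_univ _, hPr f hf⟩
    simpa using card_le_card this
  have h1 : P.card * r ≤ n * (y - 1).choose (r - 1) := by
    have e1 : ∑ f ∈ P, (univ.filter (fun x => x ∈ f)).card =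
        ∑ x : Fin n, (P.filter (fun f => x ∈ f)).card :=
      sum_card_bipartiteAbove_eq_sum_card_bipartiteBelow (s := P) (t := univ) (fun f x => x ∈ f)
    have e2 : ∑ f ∈ P, (univ.filter (fun x => x ∈ f)).card = P.card * r := by
      rw [← smul_eq_mul, ← sum_const]
      refine sum_congr rfl fun f hf => ?_
      rw [← hPr f hf]; congr 1; ext; simp
    rw [← e2, e1]
    refine (sum_le_card_nsmul _ _ ((y - 1).choose (r - 1)) fun x _ => ?_).trans (by simp)
    rcases (P.filter (fun f => x ∈ f)).eq_empty_or_nonempty with h | ⟨f, hf⟩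
    · simp [h]
    · rw [mem_filter] at hf
      refine (contain_count (r := r) (cl x) x _ fun g hg => ?_).trans
        (Nat.choose_le_choose _ ?_)
      · rw [mem_filter] at hg
        exact ⟨hPr g hg.1, hg.2, hcl g hg.1 x hg.2⟩
      · have := hy f hf.1 x hf.2
        omega
  obtain ⟨y, rfl⟩ : ∃ u, y = u + 1 := ⟨y - 1, by omega⟩
  obtain ⟨n, rfl⟩ : ∃ u, n = u + 1 := ⟨n - 1, by omega⟩
  obtain ⟨s, rfl⟩ : ∃ u, r = u + 1 := ⟨r - 1, by omega⟩
  simp only [Nat.add_sub_cancel] at h1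
  have h2 := choose_ratio y n s (by omega) (by omega)
  have h3 := Nat.add_one_mul_choose_eq n s
  have h4 : P.card * n ≤ (n + 1).choose (s + 1) * y := by
    refine Nat.le_of_mul_le_mul_right ?_ (by omega : 0 < s + 1)
    calc P.card * n * (s + 1) = P.card * (s + 1) * n := by ring
      _ ≤ (n + 1) * y.choose s * n := by gcongr
      _ = (n + 1) * (y.choose s * n) := by ring
      _ ≤ (n + 1) * (y * n.choose s) := by gcongr
      _ = y * ((n + 1) * n.choose s) := by ring
      _ = y * ((n + 1).choose (s + 1) * (s + 1)) := by rw [h3]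
      _ = _ := by ring
  rw [Nat.mul_add, Nat.mul_add]
  omega


theorem core {n r t q : ℕ} (hr : 2 ≤ r) (ht : 1 ≤ t) (hn : 1 ≤ n)
    (R : Fin n → Fin n → Prop) (hz : ¬ ∃ w, Zig R (2 * t) w)
    (G : Finset (Finset (Fin n))) (c : Finset (Fin n) → Fin n) (hGr : ∀ e ∈ G, e.card = r + 1)
    (hc : ∀ e ∈ G, c e ∈ e ∧ ∀ y ∈ e, y ≠ c e → R (c e) y) (K M Zb : ℕ)
    (hK : K = 2 * (2 * t + 1)) (hM : M = K * q) (hZb : Zb = M + 2 ^ M * t) :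
    ∃ σ p : ℕ, q * σ ≤ K * n ^ r ∧
      G.card ≤ σ + M * (Zb * n ^ (r - 1)) + (t - 1) * n.choose r + p ∧
      (p = 0 ∨ ∃ T : Finset (Fin n), T.card = t ∧ ∃ h : ℕ,
        p * n + n.choose r * h ≤ n.choose r * n ∧
        (G.filter (fun A => A ∩ T = ∅)).card ≤
          σ + M * (Zb * n ^ (r - 1)) + t * (h * n ^ (r - 1))) := by
  classical
  let out : Fin n → Finset (Fin n) := fun x => univ.filter (fun y => R x y)
  let B : Finset (Fin n) := univ.filter (fun x => n ≤ q * (out x).card)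
  let Nb : Fin n → Finset (Fin n) := fun y => B.filter (fun x => R x y)
  let D : Finset (Fin n) → Finset (Fin n) := fun f => B.filter (fun x => ∀ y ∈ f, R x y)
  let Z : Finset (Fin n) := B ∪ univ.filter (fun y => t + 1 ≤ (Nb y).card)
  let 𝓕 : Finset (Finset (Fin n)) := powersetCard r univ
  have hout : ∑ x, (out x).card ≤ K * n := by
    have h1 := arrow_bound (2 * t) (univ.filter (fun p : Fin n × Fin n => R p.1 p.2)) (by
      rintro ⟨w, hw⟩
      exact hz ⟨w, by simpa using hw⟩)
    have h2 : (univ.filter (fun p : Fin n × Fin n => R p.1 p.2)).card = ∑ x, (out x).card := by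
      rw [← univ_product_univ]
      rw [card_filter, sum_product]
      simp only [out, card_filter]
    rw [h2] at h1
    have h3 : ∀ s : Finset (Fin n), s.card ≤ n := fun s => by simpa using card_le_univ s
    have h4 := h3 ((univ.filter (fun p : Fin n × Fin n => R p.1 p.2)).image Prod.fst)
    have h5 := h3 ((univ.filter (fun p : Fin n × Fin n => R p.1 p.2)).image Prod.snd)
    calc _ ≤ _ := h1
      _ ≤ (2 * t + 1) * (n + n) := Nat.mul_le_mul_left _ (by omega)
      _ = K * n := by rw [hK]; ring
  have hB : B.card ≤ M := by
    refine Nat.le_of_mul_le_mul_right ?_ hn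
    calc B.card * n ≤ ∑ x ∈ B, q * (out x).card := by
          rw [← smul_eq_mul]
          exact card_nsmul_le_sum _ _ _ fun x hx => (mem_filter.1 hx).2
      _ ≤ ∑ x, q * (out x).card := sum_le_univ_sum_of_nonneg (fun _ => Nat.zero_le _)
      _ = q * ∑ x, (out x).card := by rw [mul_sum]
      _ ≤ q * (K * n) := Nat.mul_le_mul_left _ hout
      _ = M * n := by rw [hM]; ring
  have hZ : Z.card ≤ Zb := by
    have hsub : Z ⊆ B ∪ B.powerset.biUnion (fun T => univ.filter (fun y => y ∉ B ∧
        T.card = t + 1 ∧ ∀ x ∈ T, R x y)) := by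
      intro y hy
      by_cases hyB : y ∈ B
      · exact mem_union_left _ hyB
      · rcases mem_union.1 hy with h | h
        · exact mem_union_left _ h
        · apply mem_union_right
          have h2 := (mem_filter.1 h).2
          obtain ⟨T, hT, hTc⟩ := exists_subset_card_eq h2
          refine mem_biUnion.2 ⟨T, mem_powerset.2 (hT.trans (filter_subset _ _)),
            mem_filter.2 ⟨mem_univ _, hyB, hTc, fun x hx => (mem_filter.1 (hT hx)).2⟩⟩
    refine (card_le_card hsub).trans ((card_union_le _ _).trans ?_)
    rw [hZb]
    refine Nat.add_le_add hB ?_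
    refine (card_biUnion_le_card_mul _ _ t ?_).trans (Nat.mul_le_mul_right _ ?_)
    · intro T hT
      by_contra hcon
      push Not at hcon
      obtain ⟨y, hy⟩ := card_pos.1 (lt_of_le_of_lt (Nat.zero_le _) hcon)
      have hTc := (mem_filter.1 hy).2.2.1
      refine hz (zig_of_complete R t ht T _ hTc hcon.le ?_ ?_)
      · rw [disjoint_left]
        intro x hx hx'
        exact (mem_filter.1 hx').2.1 (mem_powerset.1 hT hx)
      · intro x hx y hy
        exact (mem_filter.1 hy).2.2.2 x hx
    · rw [card_powerset]
      exact Nat.pow_le_pow_right (by omega) hB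
  have hDM : ∀ f, (D f).card ≤ M := fun f => (card_le_card (filter_subset _ _)).trans hB
  have hDN : ∀ f, ∀ y ∈ f, D f ⊆ Nb y := by
    intro f y hy x hx
    rw [mem_filter] at hx ⊢
    exact ⟨hx.1, hx.2 y hy⟩
  have hNt : ∀ y, y ∉ Z → (Nb y).card ≤ t := by
    intro y hy
    by_contra hcon
    exact hy (mem_union_right _ (mem_filter.2 ⟨mem_univ _, by omega⟩))
  have hfne : ∀ f ∈ 𝓕, ∃ y, y ∈ f := by
    intro f hf
    have := (mem_powersetCard.1 hf).2
    exact card_pos.1 (by omega)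
  have hDt : ∀ f ∈ 𝓕, Disjoint f Z → (D f).card ≤ t := by
    intro f hf hd
    obtain ⟨y, hy⟩ := hfne f hf
    exact (card_le_card (hDN f y hy)).trans (hNt y (disjoint_left.1 hd hy))
  -- small centres
  let Sm := G.filter (fun e => c e ∉ B)
  have hSm : q * Sm.card ≤ K * n ^ r := by
    have h1 : Sm.card ≤ ∑ x ∈ univ.filter (fun x => x ∉ B), (out x).card ^ r := by
      have : Sm.card ≤ ((univ.filter (fun x => x ∉ B)).sigma
          (fun x => powersetCard r (out x))).card := by
        refine card_le_card_of_injOn (fun e => ⟨c e, e.erase (c e)⟩) ?_ ?_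
        · intro e he
          have he := mem_filter.1 he
          obtain ⟨a1, a2⟩ := hc e he.1
          refine mem_coe.2 (mem_sigma.2 ⟨mem_filter.2 ⟨mem_univ _, he.2⟩,
            mem_powersetCard.2 ⟨fun y hy => ?_, ?_⟩⟩)
          · rw [mem_erase] at hy
            exact mem_filter.2 ⟨mem_univ _, a2 y hy.2 hy.1⟩
          · simp only
            rw [card_erase_of_mem a1, hGr e he.1]; rfl
        · intro e he e' he' h
          simp only [Sigma.mk.injEq, heq_eq_eq] at h
          rw [← insert_erase (hc e (mem_filter.1 he).1).1, h.2, h.1,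
            insert_erase (hc e' (mem_filter.1 he').1).1]
      rw [card_sigma] at this
      refine this.trans (sum_le_sum fun x _ => ?_)
      rw [card_powersetCard]
      exact Nat.choose_le_pow _ _
    calc q * Sm.card ≤ q * ∑ x ∈ univ.filter (fun x => x ∉ B), (out x).card ^ r :=
          Nat.mul_le_mul_left _ h1
      _ = ∑ x ∈ univ.filter (fun x => x ∉ B), q * (out x).card ^ r := by rw [mul_sum]
      _ ≤ ∑ x ∈ univ.filter (fun x => x ∉ B), (out x).card * n ^ (r - 1) := by
          refine sum_le_sum fun x hx => ?_
          have hx := (mem_filter.1 hx).2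
          have hlt : q * (out x).card ≤ n := by
            by_contra hcon
            exact hx (mem_filter.2 ⟨mem_univ _, by omega⟩)
          have hle : (out x).card ≤ n := by simpa using card_le_univ (out x)
          obtain ⟨s, rfl⟩ : ∃ s, r = s + 2 := ⟨r - 2, by omega⟩
          rw [show s + 2 - 1 = s + 1 by omega]
          calc q * (out x).card ^ (s + 2)
              = (out x).card * ((q * (out x).card) * (out x).card ^ s) := by ring
            _ ≤ (out x).card * (n * n ^ s) := by gcongr
            _ = _ := by ring
      _ ≤ ∑ x, (out x).card * n ^ (r - 1) := sum_le_univ_sum_of_nonneg (fun _ => Nat.zero_le _)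
      _ = (∑ x, (out x).card) * n ^ (r - 1) := by rw [sum_mul]
      _ ≤ K * n * n ^ (r - 1) := Nat.mul_le_mul_right _ hout
      _ = K * n ^ r := by rw [mul_assoc, ← pow_succ']; congr 2; omega
  -- big centres
  have hbig : ∀ (Q : Finset (Fin n) → Prop) [DecidablePred Q],
      (G.filter (fun e => c e ∈ B ∧ Q (e.erase (c e)))).card ≤
        M * (Zb * n ^ (r - 1)) +
          ∑ f ∈ 𝓕.filter (fun f => Q f ∧ Disjoint f Z), (D f).card := by
    intro Q _
    have h1 : (G.filter (fun e => c e ∈ B ∧ Q (e.erase (c e)))).card ≤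
        ((𝓕.filter Q).sigma D).card := by
      refine card_le_card_of_injOn (fun e => ⟨e.erase (c e), c e⟩) ?_ ?_
      · intro e he
        have he := mem_filter.1 he
        obtain ⟨a1, a2⟩ := hc e he.1
        refine mem_coe.2 (mem_sigma.2 ⟨mem_filter.2 ⟨mem_powersetCard.2 ⟨subset_univ _, ?_⟩,
          he.2.2⟩, mem_filter.2 ⟨he.2.1, fun y hy => ?_⟩⟩)
        · simp only
          rw [card_erase_of_mem a1, hGr e he.1]; rfl
        · simp only [mem_erase] at hy
          exact a2 y hy.2 hy.1
      · intro e he e' he' h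
        simp only [Sigma.mk.injEq, heq_eq_eq] at h
        rw [← insert_erase (hc e (mem_filter.1 he).1).1, h.1, h.2,
          insert_erase (hc e' (mem_filter.1 he').1).1]
    rw [card_sigma] at h1
    refine h1.trans ?_
    rw [← sum_filter_add_sum_filter_not (𝓕.filter Q) (fun f => Disjoint f Z), add_comm]
    rw [filter_filter, filter_filter]
    refine Nat.add_le_add_right ?_ _
    refine (sum_le_card_nsmul _ _ M fun f _ => hDM f).trans ?_
    rw [smul_eq_mul, mul_comm]
    refine Nat.mul_le_mul_left _ ((meet_count (r := r) Z _ fun f hf => ?_).trans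
      (Nat.mul_le_mul_right _ hZ))
    rw [mem_filter] at hf
    exact ⟨(mem_powersetCard.1 hf.1).2, hf.2.2⟩
  let P := 𝓕.filter (fun f => Disjoint f Z ∧ (D f).card = t)
  refine ⟨Sm.card, P.card, hSm, ?_, ?_⟩
  · have h1 := hbig (fun _ => True)
    have h2 := card_filter_add_card_filter_not (s := G) (fun e => c e ∈ B)
    have h3 : ∑ f ∈ 𝓕.filter (fun f => True ∧ Disjoint f Z), (D f).card ≤
        (t - 1) * n.choose r + P.card := by
      have hle : ∀ f ∈ 𝓕.filter (fun f => True ∧ Disjoint f Z), (D f).card ≤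
          (t - 1) + if (D f).card = t then 1 else 0 := by
        intro f hf
        have hf := mem_filter.1 hf
        have := hDt f hf.1 hf.2.2
        split_ifs <;> omega
      refine (sum_le_sum hle).trans ?_
      rw [sum_add_distrib, sum_const, smul_eq_mul, ← card_filter, filter_filter, mul_comm]
      refine Nat.add_le_add (Nat.mul_le_mul_left _ ?_) (card_le_card ?_)
      · have := card_le_card (filter_subset (fun f => True ∧ Disjoint f Z) 𝓕)
        simpa [𝓕] using this
      · intro f hf
        simp only [mem_filter, true_and] at hf
        exact mem_filter.2 hf
    simp only [and_true] at h1
    have h4 : Sm.card = (G.filter (fun e => ¬ c e ∈ B)).card := rfl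
    omega
  · rcases P.eq_empty_or_nonempty with hP | hP
    · left; simp [hP]
    right
    let cl : Fin n → Finset (Fin n) := fun y => univ.filter (fun y' => y' ∉ Z ∧ Nb y' = Nb y)
    have hPN : ∀ f ∈ P, ∀ x ∈ f, x ∉ Z ∧ Nb x = D f := by
      intro f hf x hx
      obtain ⟨h1, h2, h3⟩ := mem_filter.1 hf
      have hxZ := disjoint_left.1 h2 hx
      exact ⟨hxZ, (eq_of_subset_of_card_le (hDN f x hx) (by rw [h3]; exact hNt x hxZ)).symm⟩
    obtain ⟨f0, hf0⟩ := hP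
    obtain ⟨x0, hx0⟩ := hfne f0 (mem_filter.1 hf0).1
    obtain ⟨x, hx, hmax⟩ := exists_max_image (P.biUnion id) (fun x => (cl x).card)
      ⟨x0, mem_biUnion.2 ⟨f0, hf0, hx0⟩⟩
    obtain ⟨f, hf, hxf⟩ := mem_biUnion.1 hx
    simp only [id] at hxf
    have hTc : (Nb x).card = t := by
      rw [(hPN f hf x hxf).2]
      exact (mem_filter.1 hf).2.2
    have hcn : (cl x).card ≤ n := by simpa using card_le_univ (cl x)
    have hcc := class_count hr hn P (fun f hf => (mem_powersetCard.1 (mem_filter.1 hf).1).2) cl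
      (by
        intro g hg a ha b hb
        refine mem_filter.2 ⟨mem_univ _, (hPN g hg b hb).1, ?_⟩
        rw [(hPN g hg b hb).2, (hPN g hg a ha).2])
      (y := (cl x).card)
      (card_pos.2 ⟨x, mem_filter.2 ⟨mem_univ _, (hPN f hf x hxf).1, rfl⟩⟩) hcn
      (fun g hg a ha => hmax a (mem_biUnion.2 ⟨g, hg, ha⟩))
    refine ⟨Nb x, hTc, n - (cl x).card, ?_, ?_⟩
    · calc _ ≤ n.choose r * (cl x).card + n.choose r * (n - (cl x).card) :=
            Nat.add_le_add_right hcc _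
        _ = _ := by rw [← Nat.mul_add]; congr 1; omega
    · have h1 := hbig (fun f => ¬ Disjoint f (cl x)ᶜ)
      have h2 : (G.filter (fun A => A ∩ Nb x = ∅)).card ≤ Sm.card +
          (G.filter (fun e => c e ∈ B ∧ ¬ Disjoint (e.erase (c e)) (cl x)ᶜ)).card := by
        refine (card_le_card ?_).trans (card_union_le _ _)
        intro e he
        obtain ⟨heG, heT⟩ := mem_filter.1 he
        by_cases hB' : c e ∈ B
        · refine mem_union_right _ (mem_filter.2 ⟨heG, hB', ?_⟩)
          obtain ⟨a1, a2⟩ := hc e heG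
          have : 0 < (e.erase (c e)).card := by
            rw [card_erase_of_mem a1, hGr e heG]; omega
          obtain ⟨y, hy⟩ := card_pos.1 this
          rw [not_disjoint_iff]
          refine ⟨y, hy, ?_⟩
          rw [mem_compl]
          intro hycl
          rw [mem_erase] at hy
          have hy2 := (mem_filter.1 hycl).2.2
          have : c e ∈ Nb y := mem_filter.2 ⟨hB', a2 y hy.2 hy.1⟩
          rw [hy2] at this
          have h5 : c e ∈ e ∩ Nb x := mem_inter.2 ⟨a1, this⟩
          rw [heT] at h5
          simp at h5
        · exact mem_union_left _ (mem_filter.2 ⟨heG, hB'⟩)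
      have h3 : ∑ f ∈ 𝓕.filter (fun f => ¬ Disjoint f (cl x)ᶜ ∧ Disjoint f Z), (D f).card ≤
          t * ((n - (cl x).card) * n ^ (r - 1)) := by
        refine (sum_le_card_nsmul _ _ t fun f hf => ?_).trans ?_
        · have hf := mem_filter.1 hf
          exact hDt f hf.1 hf.2.2
        · rw [smul_eq_mul, mul_comm]
          refine Nat.mul_le_mul_left _ ((meet_count (r := r) (cl x)ᶜ _ fun f hf => ?_).trans ?_)
          · have hf := mem_filter.1 hf
            exact ⟨(mem_powersetCard.1 hf.1).2, hf.2.1⟩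
          · rw [card_compl, Fintype.card_fin]
      omega

theorem pow_le_choose_aux {n r : ℕ} (hr : 1 ≤ r) (hrn : r ≤ n) :
    n ^ r ≤ r ^ r * r.factorial * n.choose r := by
  have h1 : n ≤ r * (n + 1 - r) := by
    obtain ⟨d, rfl⟩ := Nat.exists_eq_add_of_le hrn
    rw [show r + d + 1 - r = d + 1 by omega]
    nlinarith
  calc n ^ r ≤ (r * (n + 1 - r)) ^ r := Nat.pow_le_pow_left h1 r
    _ = r ^ r * (n + 1 - r) ^ r := by rw [mul_pow]
    _ ≤ r ^ r * (r.factorial * n.choose r) := by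
        refine Nat.mul_le_mul_left _ ?_
        rw [← Nat.descFactorial_eq_factorial_mul_choose]
        exact Nat.pow_sub_le_descFactorial n r
    _ = _ := by ring

theorem main_aux (k t : ℕ) (hk : 4 ≤ k) (ht : 1 ≤ t)
    (ε : ℝ) (hε : 0 < ε) :
    ∃ δ : ℝ, 0 < δ ∧ ∃ n₀ : ℕ, ∀ n : ℕ, n₀ ≤ n →
      ∀ F : Finset (Finset (Fin n)), (∀ A ∈ F, A.card = k) →
        ¬ ContainsLinearPath k (2 * t + 2) F →
        (t - δ) * (n.choose (k - 1)) ≤ (F.card : ℝ) →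
        ∃ S : Finset (Fin n), S.card = t ∧
          ((F.filter (fun A => A ∩ S = ∅)).card : ℝ) ≤ ε * (n.choose (k - 1)) := by
  classical
  obtain ⟨r, rfl⟩ : ∃ r, k = r + 1 := ⟨k - 1, by omega⟩
  simp only [Nat.add_sub_cancel]
  obtain ⟨m, hm⟩ : ∃ m, m = (2 * t + 1) + (2 * t + 2) * (r + 1) := ⟨_, rfl⟩
  obtain ⟨C1, hC1⟩ : ∃ C1, C1 = (r + 1) ^ (r + 1) *
    ((2 ^ 2 ^ (r + 1) + 1) * (m + 1)) ^ (2 ^ (r + 1) + 1) := ⟨_, rfl⟩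
  obtain ⟨K, hK⟩ : ∃ K, K = 2 * (2 * t + 1) := ⟨_, rfl⟩
  obtain ⟨cc, hcc⟩ : ∃ cc : ℕ, cc = r ^ r * r.factorial := ⟨_, rfl⟩
  obtain ⟨β, hβ⟩ : ∃ β : ℝ, β = min (1 / 4) (ε / (2 + 3 * t * cc)) := ⟨_, rfl⟩
  have hden : (0 : ℝ) < 2 + 3 * t * cc := by positivity
  have hβ0 : 0 < β := by rw [hβ]; positivity
  have hβ1 : β ≤ 1 / 4 := by rw [hβ]; exact min_le_left _ _
  have hβ2 : β * (2 + 3 * t * cc) ≤ ε := by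
    rw [← le_div_iff₀ hden, hβ]; exact min_le_right _ _
  obtain ⟨q, hq⟩ : ∃ q : ℕ, (K * cc : ℝ) ≤ β * q := by
    obtain ⟨q, hq⟩ := exists_nat_ge ((K * cc : ℝ) / β)
    exact ⟨q, by rw [div_le_iff₀ hβ0] at hq; linarith⟩
  obtain ⟨M, hM⟩ : ∃ M, M = K * q := ⟨_, rfl⟩
  obtain ⟨Zb, hZb⟩ : ∃ Zb, Zb = M + 2 ^ M * t := ⟨_, rfl⟩
  obtain ⟨n1, hn1⟩ : ∃ n1 : ℕ, ((C1 + M * Zb) * cc : ℝ) ≤ β * n1 := by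
    obtain ⟨q, hq⟩ := exists_nat_ge (((C1 + M * Zb) * cc : ℝ) / β)
    exact ⟨q, by rw [div_le_iff₀ hβ0] at hq; linarith⟩
  refine ⟨β, hβ0, n1 + r + 1, ?_⟩
  intro n hn F hF hP hcard
  obtain ⟨N, hN⟩ : ∃ N, N = n.choose r := ⟨_, rfl⟩
  rw [← hN] at hcard ⊢
  have hNpos : 0 < N := by rw [hN]; exact Nat.choose_pos (by omega)
  have hpow : n ^ r ≤ cc * N := by
    rw [hcc, hN]
    exact pow_le_choose_aux (by omega) (by omega)
  have hz : ¬ ∃ w, Zig (Arr m F) (2 * t) w := by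
    rintro ⟨w, hw⟩
    exact hP (zig_path (by omega) ht F hF (by omega) w hw)
  set H := F.filter (fun e => ¬ ∃ c, Ctr m F e c) with hH
  set G := F.filter (fun e => ∃ c, Ctr m F e c) with hG
  have hFsum : G.card + H.card = F.card := card_filter_add_card_filter_not _
  have hHc : H.card ≤ C1 * n ^ (r - 1) := by
    have := bad_bound (m := m) (L := 2 * t + 2) hk F H hF
      (by rw [hm]; nlinarith) (by rw [hm]; omega) hP (filter_subset _ _)
      (fun e he c hc => (mem_filter.1 he).2 ⟨c, hc⟩)
    rw [hC1, mul_assoc]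
    simpa using this
  have hcex : ∀ e ∈ G, ∃ c, Ctr m F e c := fun e he => (mem_filter.1 he).2
  have : Nonempty (Fin n) := ⟨⟨0, by omega⟩⟩
  choose! c hc using hcex
  obtain ⟨σ, p, hσ, hGc, hp⟩ := core (q := q) (r := r) (by omega) ht (by omega) (Arr m F) hz G c
    (fun e he => hF e (mem_filter.1 he).1) hc K M Zb hK hM hZb
  rw [← hN] at hGc hp
  have hn0 : (0 : ℝ) < n := by exact_mod_cast (by omega : 0 < n)
  have hN0 : (0 : ℝ) < N := by exact_mod_cast hNpos
  have hpowR : (n : ℝ) ^ r ≤ cc * N := by exact_mod_cast hpow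
  have hpr : (n : ℝ) ^ (r - 1) * n = n ^ r := by
    rw [← pow_succ]; congr 1; omega
  have hn1' : ((C1 + M * Zb) * cc : ℝ) ≤ β * n := by
    refine hn1.trans (mul_le_mul_of_nonneg_left ?_ hβ0.le)
    exact_mod_cast (by omega : n1 ≤ n)
  have e1 : ((C1 + M * Zb) * (n : ℝ) ^ (r - 1)) ≤ β * N := by
    refine le_of_mul_le_mul_right ?_ hn0
    calc (C1 + M * Zb) * (n : ℝ) ^ (r - 1) * n = (C1 + M * Zb) * (n : ℝ) ^ r := by
          rw [← hpr]; ring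
      _ ≤ (C1 + M * Zb) * (cc * N) := by gcongr
      _ = ((C1 + M * Zb) * cc) * N := by ring
      _ ≤ β * n * N := by gcongr
      _ = _ := by ring
  have hσR : (q : ℝ) * σ ≤ K * n ^ r := by exact_mod_cast hσ
  have hccpos : (0 : ℝ) < cc := by
    rw [hcc]; exact_mod_cast Nat.mul_pos (Nat.pow_pos (by omega : 0 < r)) r.factorial_pos
  have hq0 : (0 : ℝ) < q := by
    have h1 : (0 : ℝ) < K * cc := by
      have : (0 : ℝ) < K := by rw [hK]; positivity
      positivity
    by_contra hcon
    have : (q : ℝ) ≤ 0 := not_lt.1 hcon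
    nlinarith
  have e2 : (σ : ℝ) ≤ β * N := by
    refine le_of_mul_le_mul_left ?_ hq0
    calc (q : ℝ) * σ ≤ K * n ^ r := hσR
      _ ≤ K * (cc * N) := by gcongr
      _ = (K * cc) * N := by ring
      _ ≤ β * q * N := by gcongr
      _ = _ := by ring
  have hGR : (G.card : ℝ) ≤ σ + M * (Zb * n ^ (r - 1)) + (t - 1) * N + p := by
    have : ((t - 1 : ℕ) : ℝ) = t - 1 := by push_cast [ht]; rfl
    rw [← this]
    exact_mod_cast hGc
  have hHR : (H.card : ℝ) ≤ C1 * n ^ (r - 1) := by exact_mod_cast hHc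
  have hFR : (G.card : ℝ) + H.card = F.card := by exact_mod_cast hFsum
  have hpN : (1 - 3 * β) * N ≤ p := by linarith
  rcases hp with hp0 | ⟨T, hT, h, hh, hfin⟩
  · exfalso
    rw [hp0] at hpN
    push_cast at hpN
    have := mul_le_mul_of_nonneg_right hβ1 hN0.le
    linarith
  refine ⟨T, hT, ?_⟩
  have hhR : (p : ℝ) * n + N * h ≤ N * n := by exact_mod_cast hh
  have e3 : (h : ℝ) ≤ 3 * β * n := by
    refine le_of_mul_le_mul_left ?_ hN0
    have := mul_le_mul_of_nonneg_right hpN hn0.le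
    linarith
  have hfinR : ((G.filter (fun A => A ∩ T = ∅)).card : ℝ) ≤
      σ + M * (Zb * n ^ (r - 1)) + t * (h * n ^ (r - 1)) := by exact_mod_cast hfin
  have e4 : (t : ℝ) * (h * n ^ (r - 1)) ≤ 3 * t * cc * β * N := by
    calc (t : ℝ) * (h * n ^ (r - 1)) ≤ t * (3 * β * n * n ^ (r - 1)) := by gcongr
      _ = 3 * t * β * (n ^ (r - 1) * n) := by ring
      _ = 3 * t * β * n ^ r := by rw [hpr]
      _ ≤ 3 * t * β * (cc * N) := by gcongr
      _ = _ := by ring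
  have hsplit : (F.filter (fun A => A ∩ T = ∅)).card ≤
      (G.filter (fun A => A ∩ T = ∅)).card + H.card := by
    refine (card_le_card ?_).trans (card_union_le _ _)
    intro e he
    obtain ⟨h1, h2⟩ := mem_filter.1 he
    by_cases h3 : ∃ c, Ctr m F e c
    · exact mem_union_left _ (mem_filter.2 ⟨mem_filter.2 ⟨h1, h3⟩, h2⟩)
    · exact mem_union_right _ (mem_filter.2 ⟨h1, h3⟩)
  have hsplitR : ((F.filter (fun A => A ∩ T = ∅)).card : ℝ) ≤
      (G.filter (fun A => A ∩ T = ∅)).card + H.card := by exact_mod_cast hsplit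
  have e5 : β * (2 + 3 * t * cc) * N ≤ ε * N := by gcongr
  linarith


/-- Theorem 5.3 (stability): for k ≥ 4, t ≥ 1 and ε > 0 there are δ > 0 and n₀ such that
for n ≥ n₀, every family of k-sets on [n] with no linear path of length 2t+2 and at least
(t-δ)·C(n,k-1) members has a t-set S such that at most ε·C(n,k-1) members miss S. -/
theorem turan_linear_path_stability (k t : ℕ) (hk : 4 ≤ k) (ht : 1 ≤ t)
    (ε : ℝ) (hε : 0 < ε) :
    ∃ δ : ℝ, 0 < δ ∧ ∃ n₀ : ℕ, ∀ n : ℕ, n₀ ≤ n →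
      ∀ F : Finset (Finset (Fin n)), (∀ A ∈ F, A.card = k) →
        ¬ ContainsLinearPath k (2 * t + 2) F →
        (t - δ) * (n.choose (k - 1)) ≤ (F.card : ℝ) →
        ∃ S : Finset (Fin n), S.card = t ∧
          ((F.filter (fun A => A ∩ S = ∅)).card : ℝ) ≤ ε * (n.choose (k - 1)) := by
  exact main_aux k t hk ht ε hε
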